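/- arXiv:math/0307401 — 4 statements merged into one kernel-verified Lean document; each statement's English description precedes it below -/
import Mathlib

section
/- Let h : Σ₂* → Σ₂* be a morphism such that h(01) ≠ ε. Then the following statements are equivalent: (a) h is non-erasing and h(01101001) is 7/3-power-free; (b) there exists an integer k ≥ 0 such that h = μ^k or h = E ∘ μ^k; (c) h maps every infinite 7/3-power-free binary word to an infinite 7/3-power-free binary word; (d) there exists an infinite 7/3-power-free binary word whose image under h is 7/3-power-free. -/
/-- The Thue–Morse morphism `μ` on a single letter (`false` = 0, `true` = 1):
`μ(0) = 01`, `μ(1) = 10`. -/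
def muLetter : Bool → List Bool
  | false => [false, true]
  | true  => [true, false]

/-- The Thue–Morse morphism `μ` on binary words. -/
def mu (w : List Bool) : List Bool := (w.map muLetter).flatten

/-- `z` is a `β`-power (for a rational `β`): `z = xⁿx'` with `x'` a prefix of `x`
and `n + |x'|/|x| = β`. -/
def IsPower (β : ℚ) (z : List Bool) : Prop :=
  ∃ (n : ℕ) (x x' : List Bool), x ≠ [] ∧ x' <+: x ∧
    z = (List.replicate n x).flatten ++ x' ∧
    (n : ℚ) + (x'.length : ℚ) / (x.length : ℚ) = β

/-- The finite word `w` is `α`-power-free: no subword (contiguous factor) of `w`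
is a `β`-power for any rational `β ≥ α`. -/
def PowerFree (α : ℝ) (w : List Bool) : Prop :=
  ∀ z : List Bool, z <:+: w → ∀ β : ℚ, α ≤ (β : ℝ) → ¬ IsPower β z

/-- The finite word `w` contains an `α`-power: some subword of `w` is a
`β`-power for some rational `β ≥ α`. -/
def ContainsPower (α : ℝ) (w : List Bool) : Prop :=
  ∃ z : List Bool, z <:+: w ∧ ∃ β : ℚ, α ≤ (β : ℝ) ∧ IsPower β z

/-- `z` is a (finite) subword of the infinite word `w : ℕ → Bool`. -/
def InfSubword (z : List Bool) (w : ℕ → Bool) : Prop :=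
  ∃ i : ℕ, z = (List.range z.length).map fun k => w (i + k)

/-- The infinite word `w` is `α`-power-free. -/
def PowerFreeInf (α : ℝ) (w : ℕ → Bool) : Prop :=
  ∀ z : List Bool, InfSubword z w → ∀ β : ℚ, α ≤ (β : ℝ) → ¬ IsPower β z

/-- The infinite word `w` contains an `α`-power. -/
def ContainsPowerInf (α : ℝ) (w : ℕ → Bool) : Prop :=
  ∃ z : List Bool, InfSubword z w ∧ ∃ β : ℚ, α ≤ (β : ℝ) ∧ IsPower β z

/-- The length-`n` prefix of an infinite word. -/
def wordPrefix (w : ℕ → Bool) (n : ℕ) : List Bool := (List.range n).map w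

/-- `h : Σ₂* → Σ₂*` is a morphism. -/
def IsMorphism (h : List Bool → List Bool) : Prop :=
  ∀ x y : List Bool, h (x ++ y) = h x ++ h y

/-- A morphism is non-erasing if it erases neither letter. -/
def NonErasing (h : List Bool → List Bool) : Prop :=
  h [false] ≠ [] ∧ h [true] ≠ []

/-- The infinite word `u` is the image of the infinite word `w` under the morphism `h`
(obtained by concatenating the images of the letters of `w`): every `h(w[0..n))` is a
prefix of `u`, and these prefixes exhaust `u`. -/
def IsMorphImage (h : List Bool → List Bool) (w u : ℕ → Bool) : Prop :=
  (∀ n : ℕ, wordPrefix u (h (wordPrefix w n)).length = h (wordPrefix w n)) ∧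
  ∀ m : ℕ, ∃ n : ℕ, m ≤ (h (wordPrefix w n)).length

/-- The complementation morphism `E` : `E(0) = 1`, `E(1) = 0`. -/
def eMorph (w : List Bool) : List Bool := w.map fun b => !b

/-- The Thue–Morse word `μ^ω(0)` (`tm n` = parity of the binary digit sum of `n`). -/
def tm (n : ℕ) : Bool := (Nat.digits 2 n).sum % 2 == 1

/-- `μ³(0) = 01101001`. -/
def w01101001 : List Bool := [false, true, true, false, true, false, false, true]

/-- `μ³(1) = 10010110`. -/
def w10010110 : List Bool := [true, false, false, true, false, true, true, false]

/-! Let `α > 2`. A factor of `μ(w)` that is longer than twice its period has an even period, so a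
forbidden power in `μ(w)` comes from one in `w`, and `μ` preserves `α`-power-freeness. Conversely,
a `7/3`-power-free word is `μ(t)` up to at most two letters at either end. Descending three times,
every long `7/3`-power-free word contains `μ³(0) = 01101001`.

It remains to see that `x = h(0)` and `y = h(1)` are `μ^k(b)` and `μ^k(E(b))` for a letter `b` as
soon as `h(01101001) = xyyxyxxy` is `7/3`-power-free. Write this word as `u μ(r) v` with short `u`
and `v`. If `x` or `y` is long, it contains a double letter, which never is a block of `μ`;
comparing its occurrences shows that `x` and `y` have even length. If `u` has even length, then
`x = μ(s)` and `y = μ(t)` for shorter words `s` and `t`, and one descends. Otherwise the blocks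
straddle the boundaries, so `cx = μ(s)c` and `cy = μ(t)c` for some letter `c`; descending to `s` and
`t` shows that they begin with different letters, whereas both begin with `c`. -/

section Periods

variable {A : Type*} {x x' z z' : List A} {p : ℕ}

theorem hasPeriod_flatten_replicate_append (n : ℕ) (h : x' <+: x) :
    ((List.replicate n x).flatten ++ x').HasPeriod x.length := by
  cases n with
  | zero => exact List.hasPeriod_of_length_le _ _ (by simpa using h.length_le)
  | succ n =>
    have hshift : (List.replicate (n + 1) x).flatten ++ x' =
        x ++ ((List.replicate n x).flatten ++ x') := by
      rw [List.replicate_succ, List.flatten_cons, List.append_assoc]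
    have htake : ((List.replicate (n + 1) x).flatten ++ x').take x.length = x := by
      rw [hshift, List.take_left]
    rw [List.HasPeriod, htake, ← List.append_assoc, ← List.flatten_cons, ← List.replicate_succ,
      List.replicate_succ' (n := n + 1), List.flatten_append, List.append_assoc,
      List.prefix_append_right_inj]
    simpa using h.trans (List.prefix_append x x')

theorem eq_of_hasPeriod_of_take_eq (hp : 0 < p) (hz : z.HasPeriod p) (hz' : z'.HasPeriod p)
    (hlen : z.length = z'.length) (htake : z.take p = z'.take p) : z = z' := by
  rw [List.hasPeriod_iff_forall_getElem?_mod] at hz hz'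
  refine List.ext_getElem? fun i => ?_
  rcases lt_or_ge i z.length with hi | hi
  · rw [hz i hi, hz' i (hlen ▸ hi), ← List.getElem?_take_of_lt (Nat.mod_lt i hp), htake,
      List.getElem?_take_of_lt (Nat.mod_lt i hp)]
  · rw [List.getElem?_eq_none hi, List.getElem?_eq_none (hlen ▸ hi)]

theorem eq_flatten_replicate_append_take (hx : x ≠ []) (hz : z.HasPeriod x.length)
    (htake : z.take x.length = x.take z.length) :
    z = (List.replicate (z.length / x.length) x).flatten ++ x.take (z.length % x.length) := by
  have hpos := List.length_pos_of_ne_nil hx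
  have hper := hasPeriod_flatten_replicate_append (z.length / x.length)
    (List.take_prefix (z.length % x.length) x)
  refine eq_of_hasPeriod_of_take_eq hpos hz hper ?_ ?_
  · simpa [(Nat.mod_lt _ hpos).le, mul_comm] using (Nat.div_add_mod z.length x.length).symm
  · rcases lt_or_ge z.length x.length with hshort | hlong
    · rw [htake, Nat.mod_eq_of_lt hshort, Nat.div_eq_of_lt hshort, List.replicate_zero,
        List.flatten_nil, List.nil_append, List.take_take, min_eq_right hshort.le]
    · obtain ⟨n, hn⟩ := Nat.exists_eq_succ_of_ne_zero (Nat.div_pos hlong hpos).ne'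
      rw [htake, List.take_of_length_le hlong, hn, List.replicate_succ, List.flatten_cons,
        List.append_assoc, List.take_left]

theorem hasPeriod_map {B : Type*} (f : A → B) (hz : z.HasPeriod p) : (z.map f).HasPeriod p := by
  rw [List.HasPeriod, ← List.map_take, ← List.map_append]
  exact List.IsPrefix.map f hz

end Periods

section PowerFree

variable {α γ : ℝ} {w v z : List Bool}

theorem isPower_iff_hasPeriod {β : ℚ} :
    IsPower β z ↔ ∃ p : ℕ, 0 < p ∧ z.HasPeriod p ∧ (z.length : ℚ) = β * p := by
  constructor
  · rintro ⟨n, x, x', hx, hx', rfl, rfl⟩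
    have hpos : 0 < x.length := List.length_pos_of_ne_nil hx
    refine ⟨x.length, hpos, hasPeriod_flatten_replicate_append n hx', ?_⟩
    have hne : (x.length : ℚ) ≠ 0 := by positivity
    simp [add_mul, div_mul_cancel₀ _ hne]
  · rintro ⟨p, hp, hz, hlen⟩
    -- The padding only matters when `z` is shorter than its period.
    obtain ⟨x, hx, hzx⟩ : ∃ x : List Bool, x.length = p ∧ z.take x.length = x.take z.length :=
      ⟨(z ++ List.replicate p false).take p, by simp, by grind⟩
    subst hx
    have hp0 : (x.length : ℚ) ≠ 0 := by positivity
    have hmod : (x.take (z.length % x.length)).length = z.length % x.length := by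
      simpa using (Nat.mod_lt _ hp).le
    refine ⟨z.length / x.length, x, x.take (z.length % x.length), List.ne_nil_of_length_pos hp,
      List.take_prefix _ _,
      eq_flatten_replicate_append_take (List.ne_nil_of_length_pos hp) hz hzx, ?_⟩
    rw [hmod, ← mul_left_inj' hp0, add_mul, div_mul_cancel₀ _ hp0, ← hlen]
    exact_mod_cast Nat.div_add_mod' z.length x.length

theorem powerFree_iff_hasPeriod :
    PowerFree α w ↔
      ∀ z, z <:+: w → ∀ p : ℕ, 0 < p → z.HasPeriod p → (z.length : ℝ) < α * p := by
  constructor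
  · intro hw z hzw p hp hz
    by_contra! hlen
    refine hw z hzw (z.length / p) ?_ (isPower_iff_hasPeriod.2 ⟨p, hp, hz, ?_⟩)
    · push_cast
      rwa [le_div_iff₀ (by positivity)]
    · rw [div_mul_cancel₀ _ (by positivity)]
  · intro hw z hzw β hβ hpow
    obtain ⟨p, hp, hz, hlen⟩ := isPower_iff_hasPeriod.1 hpow
    have hlen' : (z.length : ℝ) = β * p := by exact_mod_cast hlen
    have := hw z hzw p hp hz
    have := mul_le_mul_of_nonneg_right hβ p.cast_nonneg
    linarith

theorem PowerFree.of_infix (hw : PowerFree α w) (h : v <:+: w) : PowerFree α v :=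
  fun z hz => hw z (hz.trans h)

theorem PowerFree.mono (hw : PowerFree α w) (hαγ : α ≤ γ) : PowerFree γ w :=
  fun z hz β hβ => hw z hz β (hαγ.trans hβ)

theorem PowerFreeInf.mono {w : ℕ → Bool} (hw : PowerFreeInf α w) (hαγ : α ≤ γ) :
    PowerFreeInf γ w :=
  fun z hz β hβ => hw z hz β (hαγ.trans hβ)

theorem powerFree_eMorph (hw : PowerFree α w) : PowerFree α (eMorph w) := by
  rw [powerFree_iff_hasPeriod] at hw ⊢
  intro z hz p hp hper
  have hz' : z.map not <:+: w := by
    simpa [eMorph, Function.comp_def] using hz.map not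
  simpa using hw _ hz' p hp (hasPeriod_map not hper)

theorem infSubword_iff_exists_infix_wordPrefix {w : ℕ → Bool} :
    InfSubword z w ↔ ∃ n, z <:+: wordPrefix w n := by
  constructor
  · rintro ⟨i, hz⟩
    refine ⟨i + z.length, wordPrefix w i, [], ?_⟩
    nth_rw 1 [hz]
    simp [wordPrefix, List.range_add]
  · rintro ⟨n, u, v, h⟩
    refine ⟨u.length, List.ext_getElem (by simp) fun k hk _ => ?_⟩
    have hlt : u.length + k < (wordPrefix w n).length := by
      rw [← h]; simp; omega
    have hk' : (wordPrefix w n)[u.length + k] = z[k] := by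
      simp [← h, hk]
    simpa [wordPrefix] using hk'.symm

theorem powerFreeInf_iff {w : ℕ → Bool} :
    PowerFreeInf α w ↔ ∀ n, PowerFree α (wordPrefix w n) := by
  simp only [PowerFreeInf, PowerFree, infSubword_iff_exists_infix_wordPrefix]
  exact ⟨fun h n z hz => h z ⟨n, hz⟩, fun h z ⟨n, hz⟩ => h n z hz⟩

end PowerFree

section Decidability

instance decidableHasPeriod {A : Type*} [DecidableEq A] (z : List A) (p : ℕ) :
    Decidable (z.HasPeriod p) :=
  inferInstanceAs (Decidable (z <+: z.take p ++ z))

/-- `(7 * p + 2) / 3 = ⌈7p/3⌉` is the least length of a forbidden power with period `p`. -/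
theorem powerFree_seven_thirds_iff {w : List Bool} :
    PowerFree (7 / 3) w ↔ ∀ s ∈ w.tails, ∀ p < s.length, 0 < p → 7 * p ≤ 3 * s.length →
      ¬ (s.take ((7 * p + 2) / 3)).HasPeriod p := by
  rw [powerFree_iff_hasPeriod]
  constructor
  · intro hw s hs p _ hp hlen hper
    have hsw : s.take ((7 * p + 2) / 3) <:+: w :=
      (List.take_prefix _ s).isInfix.trans ((List.mem_tails _ _).1 hs).isInfix
    have hlt := hw _ hsw p hp hper
    rw [List.length_take, min_eq_left (by omega)] at hlt
    have hge : 7 * p ≤ 3 * ((7 * p + 2) / 3) := by omega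
    have hge' : (7 * p : ℝ) ≤ 3 * ((7 * p + 2) / 3 : ℕ) := by exact_mod_cast hge
    linarith
  · rintro hw z ⟨u, v, rfl⟩ p hp hper
    by_contra! hlen
    have hlen' : 7 * p ≤ 3 * z.length := by
      have : (7 * p : ℝ) ≤ 3 * z.length := by linarith
      exact_mod_cast this
    have hle : (7 * p + 2) / 3 ≤ z.length := by omega
    refine hw (z ++ v) (by simp) p (by simp; omega) hp (by simp; omega) ?_
    rw [List.take_append_of_le_length hle]
    exact hper.infix (List.take_prefix _ z).isInfix

instance decidablePowerFreeSevenThirds : DecidablePred (PowerFree (7 / 3)) :=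
  fun _ => decidable_of_iff' _ powerFree_seven_thirds_iff

instance decidableForallLengthLE {P : List Bool → Prop} [DecidablePred P] :
    ∀ n, Decidable (∀ w, w.length ≤ n → P w)
  | 0 => decidable_of_iff (P []) (by simp)
  | n + 1 =>
    have := decidableForallLengthLE (P := fun w => P (false :: w)) n
    have := decidableForallLengthLE (P := fun w => P (true :: w)) n
    decidable_of_iff (P [] ∧ (∀ w, w.length ≤ n → P (false :: w)) ∧
      ∀ w, w.length ≤ n → P (true :: w)) <| by
      refine ⟨fun ⟨hnil, hfalse, htrue⟩ w hw => ?_, fun h => ⟨h [] (by simp), fun w hw => h _ ?_,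
        fun w hw => h _ ?_⟩⟩
      · rcases w with _ | ⟨_ | _, w⟩
        · exact hnil
        · exact hfalse w (by simpa using hw)
        · exact htrue w (by simpa using hw)
      all_goals simpa using hw

end Decidability

section ThueMorseMorphism

variable {α : ℝ} {w z : List Bool} {p q : ℕ}

theorem mu_nil : mu [] = [] := rfl

theorem mu_cons (b : Bool) (w : List Bool) : mu (b :: w) = b :: (!b) :: mu w := by
  cases b <;> rfl

theorem mu_append (v w : List Bool) : mu (v ++ w) = mu v ++ mu w := by
  simp [mu]

theorem length_mu (w : List Bool) : (mu w).length = 2 * w.length := by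
  induction w with
  | nil => rfl
  | cons b w ih => simp only [mu_cons, List.length_cons, ih]; ring

theorem take_mu (w : List Bool) (n : ℕ) : (mu w).take (2 * n) = mu (w.take n) := by
  induction w generalizing n with
  | nil => simp [mu]
  | cons b w ih =>
    cases n with
    | zero => rfl
    | succ n => simp [mu_cons, mul_add, ih]

theorem getElem?_mu_two_mul (w : List Bool) (i : ℕ) : (mu w)[2 * i]? = w[i]? := by
  induction w generalizing i with
  | nil => rfl
  | cons b w ih =>
    cases i with
    | zero => simp [mu_cons]
    | succ i => simp [mu_cons, mul_add, ih]

theorem getElem?_mu_two_mul_add_one (w : List Bool) (i : ℕ) :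
    (mu w)[2 * i + 1]? = (mu w)[2 * i]?.map not := by
  induction w generalizing i with
  | nil => rfl
  | cons b w ih =>
    cases i with
    | zero => simp [mu_cons]
    | succ i => simpa [mu_cons, mul_add] using ih i

theorem mu_infix_mu (h : z <:+: w) : mu z <:+: mu w := by
  obtain ⟨u, v, rfl⟩ := h
  exact ⟨mu u, mu v, by simp only [mu_append]⟩

theorem hasPeriod_mu (hz : z.HasPeriod p) : (mu z).HasPeriod (2 * p) := by
  obtain ⟨v, hv⟩ := hz
  exact ⟨mu v, by rw [take_mu, ← mu_append, ← mu_append, hv]⟩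

theorem PowerFree.of_mu (hw : PowerFree α (mu w)) : PowerFree α w := by
  rw [powerFree_iff_hasPeriod] at hw ⊢
  intro z hzw p hp hz
  have hlt := hw _ (mu_infix_mu hzw) (2 * p) (by positivity) (hasPeriod_mu hz)
  rw [length_mu] at hlt
  push_cast at hlt
  linarith

theorem exists_getElem?_eq_add_of_hasPeriod_infix {A : Type*} {z w : List A} (hzw : z <:+: w)
    (hz : z.HasPeriod p) :
    ∃ i, i + z.length ≤ w.length ∧ ∀ j, i ≤ j → j + p < i + z.length → w[j]? = w[j + p]? := by
  obtain ⟨u, v, rfl⟩ := hzw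
  refine ⟨u.length, by simp, fun j hij hj => ?_⟩
  obtain ⟨k, rfl⟩ := Nat.exists_eq_add_of_le hij
  have hletter (m : ℕ) (hm : m < z.length) : (u ++ z ++ v)[u.length + m]? = z[m]? := by
    rw [List.append_assoc, List.getElem?_append_right (by omega), Nat.add_sub_cancel_left,
      List.getElem?_append_left hm]
  rw [add_assoc, hletter k (by omega), hletter (k + p) (by omega)]
  exact List.hasPeriod_iff_getElem?.1 hz k (by omega)

/-- An odd period moves the letters of one block of `mu` across a block boundary, so the factor
would alternate over a whole period. -/
theorem even_of_hasPeriod_infix_mu (hzw : z <:+: mu w) (hz : z.HasPeriod p)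
    (hlen : 2 * p < z.length) : Even p := by
  by_contra hodd
  rw [Nat.not_even_iff_odd] at hodd
  obtain ⟨i, hi, hper⟩ := exists_getElem?_eq_add_of_hasPeriod_infix hzw hz
  have hblock {j : ℕ} (hj : Even j) : (mu w)[j + 1]? = (mu w)[j]?.map not := by
    obtain ⟨m, rfl⟩ := hj.two_dvd
    exact getElem?_mu_two_mul_add_one w m
  have hstep (k : ℕ) (hk : k < p) : (mu w)[i + k + 1]? = (mu w)[i + k]?.map not := by
    rcases Nat.even_or_odd (i + k) with heven | hodd'
    · exact hblock heven
    · rw [hper (i + k) (by omega) (by omega), hper (i + k + 1) (by omega) (by omega),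
        add_right_comm, hblock (hodd'.add_odd hodd)]
  have halternate (k : ℕ) (hk : k ≤ p) : (mu w)[i + k]? = (Option.map not)^[k] (mu w)[i]? := by
    induction k with
    | zero => rfl
    | succ k ih => rw [Function.iterate_succ_apply', ← ih (by omega), ← hstep k hk, add_assoc]
  have hinvol : Function.Involutive (Option.map not) := fun o => by simp [Function.comp_def]
  have hflip : (mu w)[i]? = (mu w)[i]?.map not := by
    rw [← congrFun (hinvol.iterate_odd hodd), ← halternate p le_rfl]
    exact hper i le_rfl (by omega)
  rw [List.getElem?_eq_getElem (by omega)] at hflip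
  simp at hflip

theorem exists_infix_hasPeriod_of_infix_mu (hzw : z <:+: mu w) (hz : z.HasPeriod (2 * q))
    (hlen : 2 * q < z.length) : ∃ v, v <:+: w ∧ v.HasPeriod q ∧ z.length ≤ 2 * v.length := by
  obtain ⟨i, hi, hper⟩ := exists_getElem?_eq_add_of_hasPeriod_infix hzw hz
  rw [length_mu] at hi
  let n := (i + z.length - 1) / 2 + 1 - i / 2
  have hvlen : ((w.drop (i / 2)).take n).length = n := by simp [n]; omega
  refine ⟨(w.drop (i / 2)).take n,
    (List.take_prefix _ _).isInfix.trans (List.drop_suffix _ _).isInfix,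
    List.hasPeriod_iff_getElem?.2 fun k hk => ?_, by omega⟩
  have hletter : w[i / 2 + k]? = w[i / 2 + k + q]? := by
    rcases le_or_gt i (2 * (i / 2 + k)) with hle | hlt
    · have := hper (2 * (i / 2 + k)) hle (by omega)
      rwa [← mul_add, getElem?_mu_two_mul, getElem?_mu_two_mul] at this
    · have := hper (2 * (i / 2 + k) + 1) (by omega) (by omega)
      rw [add_right_comm, ← mul_add, getElem?_mu_two_mul_add_one, getElem?_mu_two_mul_add_one,
        getElem?_mu_two_mul, getElem?_mu_two_mul] at this
      exact Option.map_injective Bool.not_injective this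
  rw [List.getElem?_take_of_lt (by omega), List.getElem?_take_of_lt (by omega),
    List.getElem?_drop, List.getElem?_drop, hletter, add_assoc]

theorem powerFree_mu (hα : 2 < α) (hw : PowerFree α w) : PowerFree α (mu w) := by
  rw [powerFree_iff_hasPeriod] at hw ⊢
  intro z hzw p hp hz
  by_contra! hlen
  have hlong : 2 * p < z.length := by
    have hp' : (0 : ℝ) < p := by positivity
    have : (2 * p : ℝ) < z.length := by nlinarith
    exact_mod_cast this
  obtain ⟨q, rfl⟩ := (even_of_hasPeriod_infix_mu hzw hz hlong).two_dvd
  obtain ⟨v, hvw, hv, hvlen⟩ := exists_infix_hasPeriod_of_infix_mu hzw hz (by omega)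
  have hlt := hw v hvw q (by omega) hv
  have hvlen' : (z.length : ℝ) ≤ 2 * v.length := by exact_mod_cast hvlen
  push_cast at hlen
  linarith

theorem powerFree_mu_iterate (hα : 2 < α) (hw : PowerFree α w) (k : ℕ) :
    PowerFree α (mu^[k] w) := by
  induction k with
  | zero => exact hw
  | succ k ih => rw [Function.iterate_succ_apply']; exact powerFree_mu hα ih

end ThueMorseMorphism

section Factorization

variable {a b : Bool} {t v w : List Bool}

theorem PowerFree.exists_eq_mu_append (hw : PowerFree (7 / 3) (a :: b :: b :: (mu t ++ v)))
    (hv : v.length ≤ 2) : ∃ t' v', a :: b :: b :: (mu t ++ v) = mu t' ++ v' ∧ v'.length ≤ 2 := by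
  have hcubeLeft : ∀ a b, PowerFree (7 / 3) [a, b, b] → a = !b := by decide
  have hcubeRight : ∀ b c, PowerFree (7 / 3) [b, b, c] → c = !b := by decide
  have hsquare : ∀ b x y, PowerFree (7 / 3) [!b, b, b, !b, b, x, y] → x = !b := by decide
  have hlong : ∀ b c d, ¬ PowerFree (7 / 3) [!b, b, b, c, !c, d, !d] := by decide
  obtain rfl := hcubeLeft a b (hw.of_infix ⟨[], mu t ++ v, by simp⟩)
  rcases t with _ | ⟨c, _ | ⟨d, t⟩⟩
  · rcases v with _ | ⟨x, _ | ⟨y, _ | ⟨_, v⟩⟩⟩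
    · exact ⟨[!b], [b], by simp [mu_cons, mu_nil], by simp⟩
    · exact ⟨[!b], [b, x], by simp [mu_cons, mu_nil], by simp⟩
    · obtain rfl := hcubeRight b x (hw.of_infix ⟨[!b], [y], by simp [mu_nil]⟩)
      exact ⟨[!b, b], [y], by simp [mu_cons, mu_nil], by simp⟩
    · simp at hv
  · obtain rfl := hcubeRight b c (hw.of_infix ⟨[!b], (!c) :: v, by simp [mu_cons, mu_nil]⟩)
    rcases v with _ | ⟨x, _ | ⟨y, _ | ⟨_, v⟩⟩⟩
    · exact ⟨[!b, b], [b], by simp [mu_cons, mu_nil], by simp⟩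
    · exact ⟨[!b, b], [b, x], by simp [mu_cons, mu_nil], by simp⟩
    · obtain rfl := hsquare b x y (by simpa [mu_cons, mu_nil] using hw)
      exact ⟨[!b, b, b], [y], by simp [mu_cons, mu_nil], by simp⟩
    · simp at hv
  · exact (hlong b c d (hw.of_infix ⟨[], mu t ++ v, by simp [mu_cons]⟩)).elim

theorem PowerFree.exists_factorization (hw : PowerFree (7 / 3) w) :
    ∃ u t v, w = u ++ mu t ++ v ∧ u.length ≤ 2 ∧ v.length ≤ 2 := by
  induction w with
  | nil => exact ⟨[], [], [], rfl, by simp, by simp⟩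
  | cons a w ih =>
    obtain ⟨u, t, v, rfl, hu, hv⟩ := ih (hw.of_infix (List.suffix_cons a w).isInfix)
    rcases u with _ | ⟨b, _ | ⟨c, _ | ⟨_, u⟩⟩⟩
    · exact ⟨[a], t, v, rfl, by simp, hv⟩
    · exact ⟨[a, b], t, v, rfl, by simp, hv⟩
    · rcases eq_or_ne c b with rfl | hcb
      · obtain ⟨t', v', h, hv'⟩ := hw.exists_eq_mu_append hv
        exact ⟨[], t', v', h, by simp, hv'⟩
      · obtain rfl : c = !b := Bool.eq_not.2 hcb
        exact ⟨[a], b :: t, v, by simp [mu_cons], by simp, hv⟩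
    · simp at hu

theorem PowerFree.exists_mu_iterate_infix (hw : PowerFree (7 / 3) w) (k : ℕ) :
    ∃ t, PowerFree (7 / 3) t ∧ mu^[k] t <:+: w ∧ w.length + 4 ≤ 2 ^ k * (t.length + 4) := by
  induction k generalizing w with
  | zero => exact ⟨w, hw, List.infix_rfl, by simp⟩
  | succ k ih =>
    obtain ⟨u, t, v, hfact, hu, hv⟩ := hw.exists_factorization
    have hinfix : mu t <:+: w := ⟨u, v, hfact.symm⟩
    have hlen : w.length = u.length + 2 * t.length + v.length := by
      rw [hfact, List.length_append, List.length_append, length_mu]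
    obtain ⟨s, hs, hst, hslen⟩ := ih (hw.of_infix hinfix).of_mu
    refine ⟨s, hs, ?_, ?_⟩
    · rw [Function.iterate_succ_apply']
      exact (mu_infix_mu hst).trans hinfix
    · rw [pow_succ]
      linarith

theorem PowerFree.w01101001_infix (hw : PowerFree (7 / 3) w)
    (hlen : 45 ≤ w.length) : w01101001 <:+: w := by
  obtain ⟨t, ht, htw, hwt⟩ := hw.exists_mu_iterate_infix 3
  obtain ⟨a, b, c, s, rfl⟩ : ∃ a b c s, t = a :: b :: c :: s := by
    rcases t with _ | ⟨a, _ | ⟨b, _ | ⟨c, s⟩⟩⟩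
    any_goals simp at hwt; omega
    exact ⟨a, b, c, s, rfl⟩
  have hmem : ∀ a b c, PowerFree (7 / 3) [a, b, c] → false ∈ [a, b, c] := by decide
  have hfalse : [false] <:+: a :: b :: c :: s := by
    rw [List.singleton_infix_iff]
    exact List.mem_append_left s (hmem a b c (ht.of_infix ⟨[], s, rfl⟩))
  exact (mu_infix_mu (mu_infix_mu (mu_infix_mu hfalse))).trans htw

end Factorization

section Morphisms

variable {h : List Bool → List Bool} {v w x y s t : List Bool} {α : ℝ} {c : Bool}

/-- The morphism of `Σ₂*` with `0 ↦ x` and `1 ↦ y`, evaluated at `w`. Every morphism has this form,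
so statements about `h` become statements about the pair of words `(x, y)`. -/
def binaryMorphism (x y w : List Bool) : List Bool :=
  w.flatMap fun b => cond b y x

theorem IsMorphism.map_nil (hmor : IsMorphism h) : h [] = [] := by
  simpa using hmor [] []

theorem IsMorphism.infix (hmor : IsMorphism h) (hvw : v <:+: w) : h v <:+: h w := by
  obtain ⟨u, u', rfl⟩ := hvw
  exact ⟨h u, h u', by rw [hmor, hmor]⟩

theorem IsMorphism.eq_binaryMorphism (hmor : IsMorphism h) :
    h = binaryMorphism (h [false]) (h [true]) := by
  funext w
  induction w with
  | nil => exact hmor.map_nil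
  | cons b w ih =>
    rw [← List.singleton_append, hmor, ih]
    cases b <;> rfl

theorem PowerFree.eq_nil_of_cube (hα : α ≤ 3) (hw : PowerFree α (x ++ x ++ x)) : x = [] := by
  by_contra hx
  exact hw _ List.infix_rfl 3 (mod_cast hα) ⟨3, x, [], hx, List.nil_prefix, by simp, by simp⟩

theorem PowerFree.nonErasing (hmor : IsMorphism h) (h01 : h [false, true] ≠ [])
    (hα : α ≤ 3) (hw : PowerFree α (h w01101001)) : NonErasing h := by
  rw [hmor.eq_binaryMorphism] at hw h01
  refine ⟨fun hfalse => h01 ?_, fun htrue => h01 ?_⟩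
  · have hcube : PowerFree α (h [true] ++ h [true] ++ h [true]) :=
      hw.of_infix ⟨[], h [true], by simp [binaryMorphism, w01101001, hfalse]⟩
    simp [binaryMorphism, hfalse, hcube.eq_nil_of_cube hα]
  · have hcube : PowerFree α (h [false] ++ h [false] ++ h [false]) :=
      hw.of_infix ⟨[], h [false], by simp [binaryMorphism, w01101001, htrue]⟩
    simp [binaryMorphism, htrue, hcube.eq_nil_of_cube hα]

theorem mu_binaryMorphism (s t w : List Bool) :
    mu (binaryMorphism s t w) = binaryMorphism (mu s) (mu t) w := by
  induction w with
  | nil => rfl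
  | cons b w ih =>
    simp only [binaryMorphism, List.flatMap_cons, mu_append] at ih ⊢
    rw [ih]
    cases b <;> rfl

theorem cons_binaryMorphism_of_cons_eq (hx : c :: x = mu s ++ [c]) (hy : c :: y = mu t ++ [c])
    (w : List Bool) : c :: binaryMorphism x y w = mu (binaryMorphism s t w) ++ [c] := by
  induction w with
  | nil => rfl
  | cons b w ih =>
    simp only [binaryMorphism, List.flatMap_cons, mu_append] at ih ⊢
    cases b
    · rw [cond_false, ← List.cons_append, hx, List.append_assoc, List.singleton_append, ih,
        cond_false, List.append_assoc]
    · rw [cond_true, ← List.cons_append, hy, List.append_assoc, List.singleton_append, ih,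
        cond_true, List.append_assoc]

theorem wordPrefix_prefix_of_le (w : ℕ → Bool) {m n : ℕ} (hmn : m ≤ n) :
    wordPrefix w m <+: wordPrefix w n := by
  obtain ⟨k, rfl⟩ := Nat.exists_eq_add_of_le hmn
  simp [wordPrefix, List.range_add]

theorem IsMorphImage.powerFreeInf {w u : ℕ → Bool}
    (hh : ∀ v, PowerFree α v → PowerFree α (h v)) (hw : PowerFreeInf α w)
    (hu : IsMorphImage h w u) : PowerFreeInf α u := by
  rw [powerFreeInf_iff] at hw ⊢
  intro n
  obtain ⟨m, hm⟩ := hu.2 n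
  refine (hh _ (hw m)).of_infix ?_
  rw [← hu.1 m]
  exact (wordPrefix_prefix_of_le u hm).isInfix

theorem IsMorphism.exists_isMorphImage (hmor : IsMorphism h) {w : ℕ → Bool}
    (hunbounded : ∀ m, ∃ n, m ≤ (h (wordPrefix w n)).length) : ∃ u, IsMorphImage h w u := by
  have hprefix {m n : ℕ} (hmn : m ≤ n) : h (wordPrefix w m) <+: h (wordPrefix w n) := by
    obtain ⟨v, hv⟩ := wordPrefix_prefix_of_le w hmn
    exact ⟨h v, by rw [← hmor, hv]⟩
  choose N hN using fun m => (hunbounded (m + 1)).imp fun _ => Nat.lt_of_succ_le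
  refine ⟨fun m => (h (wordPrefix w (N m)))[m]'(hN m), fun n => ?_, hunbounded⟩
  refine List.ext_getElem (by simp [wordPrefix]) fun m _ hm => ?_
  have hagree : (h (wordPrefix w (N m)))[m]'(hN m) = (h (wordPrefix w n))[m] := by
    rcases le_total (N m) n with hle | hle
    · exact (hprefix hle).getElem _
    · exact ((hprefix hle).getElem hm).symm
  simpa [wordPrefix] using hagree

theorem powerFree_map_w01101001_of_isMorphImage (hmor : IsMorphism h) {w u : ℕ → Bool}
    (hw : PowerFreeInf (7 / 3) w) (hwu : IsMorphImage h w u) (hu : PowerFreeInf α u) :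
    PowerFree α (h w01101001) := by
  rw [powerFreeInf_iff] at hw hu
  have hinfix : w01101001 <:+: wordPrefix w 45 := (hw 45).w01101001_infix (by simp [wordPrefix])
  have himage := hu (h (wordPrefix w 45)).length
  rw [hwu.1] at himage
  exact himage.of_infix (hmor.infix hinfix)

end Morphisms

section ThueMorseWord

variable {α : ℝ} {h : List Bool → List Bool}

theorem tm_two_mul (n : ℕ) : tm (2 * n) = tm n := by
  rcases n.eq_zero_or_pos with rfl | hn
  · rfl
  · rw [tm, Nat.digits_def' one_lt_two (by omega)]
    simp [tm]

theorem tm_two_mul_add_one (n : ℕ) : tm (2 * n + 1) = !tm n := by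
  rw [tm, Nat.digits_def' one_lt_two (by omega), tm]
  have hdiv : (2 * n + 1) / 2 = n := by omega
  have hmod : (2 * n + 1) % 2 = 1 := by omega
  rw [hdiv, hmod, List.sum_cons]
  rcases Nat.mod_two_eq_zero_or_one (Nat.digits 2 n).sum with hsum | hsum <;>
    simp [Nat.add_mod, hsum]

theorem wordPrefix_tm_two_mul (n : ℕ) : wordPrefix tm (2 * n) = mu (wordPrefix tm n) := by
  induction n with
  | zero => rfl
  | succ n ih =>
    have hsucc (k : ℕ) : wordPrefix tm (k + 1) = wordPrefix tm k ++ [tm k] := by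
      simp [wordPrefix, List.range_succ]
    rw [mul_add, mul_one, hsucc, hsucc, hsucc, ih, mu_append, mu_cons, mu_nil, tm_two_mul,
      tm_two_mul_add_one, List.append_assoc, List.singleton_append]

theorem powerFree_singleton (hα : 1 < α) (b : Bool) : PowerFree α [b] := by
  rw [powerFree_iff_hasPeriod]
  intro z hz p hp _
  have hlen : (z.length : ℝ) ≤ 1 := by exact_mod_cast hz.length_le
  have hp' : (1 : ℝ) ≤ p := by exact_mod_cast hp
  nlinarith

theorem powerFreeInf_tm (hα : 2 < α) : PowerFreeInf α tm := by
  rw [powerFreeInf_iff]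
  intro n
  have hpow (k : ℕ) : wordPrefix tm (2 ^ k) = mu^[k] [false] := by
    induction k with
    | zero => rfl
    | succ k ih => rw [pow_succ', wordPrefix_tm_two_mul, ih, Function.iterate_succ_apply']
  refine PowerFree.of_infix ?_ (wordPrefix_prefix_of_le tm n.lt_two_pow_self.le).isInfix
  rw [hpow]
  exact powerFree_mu_iterate hα (powerFree_singleton (by linarith) false) n

theorem IsMorphism.length_map_mu (hmor : IsMorphism h) (v : List Bool) :
    (h (mu v)).length = v.length * (h [false, true]).length := by
  have hletters : (h [false, true]).length = (h [false]).length + (h [true]).length := by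
    rw [← List.length_append, ← hmor, List.singleton_append]
  induction v with
  | nil => simp [mu_nil, hmor.map_nil]
  | cons b v ih =>
    have hsplit : mu (b :: v) = [b] ++ [!b] ++ mu v := mu_cons b v
    rw [hsplit, hmor, hmor, List.length_append, List.length_append, ih, List.length_cons, hletters]
    cases b <;> simp only [Bool.not_false, Bool.not_true] <;> ring

theorem IsMorphism.exists_isMorphImage_tm (hmor : IsMorphism h) (h01 : h [false, true] ≠ []) :
    ∃ u, IsMorphImage h tm u := by
  refine hmor.exists_isMorphImage fun m => ⟨2 * m, ?_⟩
  rw [wordPrefix_tm_two_mul, hmor.length_map_mu]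
  simpa [wordPrefix] using Nat.le_mul_of_pos_right m (List.length_pos_of_ne_nil h01)

end ThueMorseWord

section Desubstitution

variable {A B p q r s t u v w x y z : List Bool} {a : Bool}

theorem drop_mu (w : List Bool) (n : ℕ) : (mu w).drop (2 * n) = mu (w.drop n) := by
  have h : mu (w.take n) ++ (mu w).drop (2 * n) = mu (w.take n) ++ mu (w.drop n) := by
    rw [← take_mu, List.take_append_drop, take_mu, ← mu_append, List.take_append_drop]
  exact List.append_cancel_left h

theorem exists_eq_mu_of_eq_append (hw : w = u ++ mu r ++ v) (hz : w = A ++ z ++ B)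
    (hA : u.length ≤ A.length) (hB : v.length ≤ B.length)
    (hparity : Even (A.length + u.length)) (hzlen : Even z.length) : ∃ s, z = mu s := by
  obtain ⟨i, hi⟩ : ∃ i, A.length = u.length + 2 * i := ⟨(A.length - u.length) / 2, by grind⟩
  obtain ⟨j, hj⟩ := hzlen.two_dvd
  have hlen := congrArg List.length (hw.symm.trans hz)
  simp only [List.length_append] at hlen
  refine ⟨(r.drop i).take j, ?_⟩
  calc z = ((A ++ z ++ B).drop A.length).take z.length := by simp
    _ = ((mu r ++ v).drop (2 * i)).take (2 * j) := by
      rw [← hz, hw, hi, hj, List.append_assoc, ← List.drop_drop, List.drop_left]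
    _ = ((mu r).drop (2 * i)).take (2 * j) := by
      rw [List.drop_append_of_le_length (by omega),
        List.take_append_of_le_length (by rw [List.length_drop]; omega)]
    _ = mu ((r.drop i).take j) := by rw [drop_mu, take_mu]

theorem odd_length_of_double (hw : w = u ++ mu r ++ v) (hx : x = p ++ a :: a :: q)
    (hz : w = A ++ x ++ B)
    (hA : u.length ≤ A.length + p.length) (hB : v.length ≤ q.length + B.length) :
    Odd (A.length + p.length + u.length) := by
  by_contra heven
  rw [Nat.not_odd_iff_even] at heven
  obtain ⟨s, hs⟩ : ∃ s, [a, a] = mu s :=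
    exists_eq_mu_of_eq_append (A := A ++ p) (B := q ++ B) hw (by simp [hz, hx])
      (by simpa using hA) (by simpa using hB) (by simpa using heven) even_two
  rcases s with _ | ⟨b, s⟩
  · simp [mu_nil] at hs
  · grind [mu_cons]

theorem PowerFree.exists_double (hz : PowerFree (7 / 3) z) (hlen : 6 ≤ z.length) :
    ∃ p a q, z = p ++ a :: a :: q ∧ q ≠ [] := by
  have hfive : ∀ b c d e f, PowerFree (7 / 3) [b, c, d, e, f] →
      b = c ∨ c = d ∨ d = e ∨ e = f := by decide
  rcases z with _ | ⟨b, _ | ⟨c, _ | ⟨d, _ | ⟨e, _ | ⟨f, _ | ⟨g, z⟩⟩⟩⟩⟩⟩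
  any_goals simp at hlen
  rcases hfive b c d e f (hz.of_infix ⟨[], g :: z, rfl⟩) with rfl | rfl | rfl | rfl
  · exact ⟨[], b, _, rfl, by simp⟩
  · exact ⟨[b], c, _, rfl, by simp⟩
  · exact ⟨[b, c], d, _, rfl, by simp⟩
  · exact ⟨[b, c, d], e, _, rfl, by simp⟩

theorem binaryMorphism_w01101001 (x y : List Bool) :
    binaryMorphism x y w01101001 = x ++ y ++ y ++ x ++ y ++ x ++ x ++ y := by
  simp [binaryMorphism, w01101001]

/-- A double letter is never a block of `mu`, so all its occurrences start at positions of the same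
parity. -/
theorem even_length_of_double_left (hW : binaryMorphism x y w01101001 = u ++ mu r ++ v)
    (hu : u.length ≤ 3) (hv : v.length ≤ 2) (hx : x = p ++ a :: a :: q) (hy : y ≠ [])
    (hq : q ≠ []) : Even x.length ∧ Even y.length := by
  have hypos := List.length_pos_of_ne_nil hy
  have hqpos := List.length_pos_of_ne_nil hq
  have hxlen : x.length = p.length + q.length + 2 := by grind
  have hexp := binaryMorphism_w01101001 x y
  have h₃ := odd_length_of_double hW hx (A := x ++ y ++ y) (B := y ++ x ++ x ++ y)
    (by simp [hexp]) (by grind) (by grind)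
  have h₅ := odd_length_of_double hW hx (A := x ++ y ++ y ++ x ++ y) (B := x ++ y)
    (by simp [hexp]) (by grind) (by grind)
  have h₆ := odd_length_of_double hW hx (A := x ++ y ++ y ++ x ++ y ++ x) (B := y)
    (by simp [hexp]) (by grind) (by grind)
  simp only [List.length_append, Nat.odd_iff, Nat.even_iff] at h₃ h₅ h₆ ⊢
  omega

theorem even_length_of_double_right (hW : binaryMorphism x y w01101001 = u ++ mu r ++ v)
    (hu : u.length ≤ 3) (hv : v.length ≤ 2) (hx : x ≠ []) (hy : y = p ++ a :: a :: q)
    (hylen : 6 ≤ y.length) : Even x.length ∧ Even y.length := by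
  have hxpos := List.length_pos_of_ne_nil hx
  have hpq : y.length = p.length + q.length + 2 := by grind
  have hexp := binaryMorphism_w01101001 x y
  have h₂ := odd_length_of_double hW hy (A := x ++ y) (B := x ++ y ++ x ++ x ++ y)
    (by simp [hexp]) (by grind) (by grind)
  have h₄ := odd_length_of_double hW hy (A := x ++ y ++ y ++ x) (B := x ++ x ++ y)
    (by simp [hexp]) (by grind) (by grind)
  have hends : Odd (x.length + p.length + u.length) ∨
      Odd ((x ++ y ++ y ++ x ++ y ++ x ++ x).length + p.length + u.length) := by
    rcases le_or_gt 2 p.length with hp | hp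
    · exact .inl <| odd_length_of_double hW hy (A := x) (B := y ++ x ++ y ++ x ++ x ++ y)
        (by simp [hexp]) (by grind) (by grind)
    · exact .inr <| odd_length_of_double hW hy (B := []) (by simp [hexp]) (by grind) (by grind)
  simp only [List.length_append, Nat.odd_iff, Nat.even_iff] at h₂ h₄ hends ⊢
  omega

theorem even_length_of_eq_append_mu_append
    (hW : binaryMorphism x y w01101001 = u ++ mu r ++ v) (hu : u.length ≤ 3) (hv : v.length ≤ 2)
    (hpf : PowerFree (7 / 3) (binaryMorphism x y w01101001).tail) (hx : x ≠ []) (hy : y ≠ [])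
    (hlen : 6 ≤ x.length ∨ 6 ≤ y.length) : Even x.length ∧ Even y.length := by
  have htail : (binaryMorphism x y w01101001).tail =
      x.tail ++ (y ++ y ++ x ++ y ++ x ++ x ++ y) := by
    rw [binaryMorphism_w01101001]; simp [List.tail_append_of_ne_nil, hx]
  rw [htail] at hpf
  rcases hlen with hlen | hlen
  · have hxpf : PowerFree (7 / 3) x := hpf.of_infix ⟨x.tail ++ y ++ y, y ++ x ++ x ++ y, by simp⟩
    obtain ⟨p, a, q, hxp, hq⟩ := hxpf.exists_double hlen
    exact even_length_of_double_left hW hu hv hxp hy hq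
  · have hypf : PowerFree (7 / 3) y := hpf.of_infix ⟨x.tail, y ++ x ++ y ++ x ++ x ++ y, by simp⟩
    obtain ⟨p, a, q, hyp, -⟩ := hypf.exists_double hlen
    exact even_length_of_double_right hW hu hv hx hyp hlen

theorem exists_eq_mu_of_even_length (hW : binaryMorphism x y w01101001 = u ++ mu r ++ v)
    (hu : u.length ≤ 3) (hv : v.length ≤ 2) (hy : y ≠ []) (hxlen : Even x.length)
    (hylen : Even y.length) (hulen : Even u.length) : ∃ s t, x = mu s ∧ y = mu t := by
  have hexp := binaryMorphism_w01101001 x y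
  have hypos := List.length_pos_of_ne_nil hy
  obtain ⟨s, hs⟩ := exists_eq_mu_of_eq_append hW (A := x ++ y ++ y) (z := x)
    (B := y ++ x ++ x ++ y) (by simp [hexp]) (by grind) (by grind) (by grind) hxlen
  obtain ⟨t, ht⟩ := exists_eq_mu_of_eq_append hW (A := x ++ y) (z := y)
    (B := x ++ y ++ x ++ x ++ y) (by simp [hexp]) (by grind) (by grind) (by grind) hylen
  exact ⟨s, t, hs, ht⟩

theorem eq_of_cons_eq_mu {c d : Bool} (hs : c :: z = mu s) (ht : d :: z = mu t) : c = d := by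
  rcases s with _ | ⟨e, s⟩ <;> rcases t with _ | ⟨e', t⟩ <;> simp_all [mu_nil, mu_cons]

/-- Here the blocks of `mu` straddle the boundaries of `x` and `y`, so that `x` and `y` end with the
same letter. -/
theorem exists_cons_eq_mu_append_of_odd_length
    (hW : binaryMorphism x y w01101001 = u ++ mu r ++ v)
    (hu : u.length ≤ 3) (hv : v.length ≤ 2) (hx : x ≠ []) (hy : y ≠ [])
    (hxlen : Even x.length) (hylen : Even y.length) (hulen : Odd u.length) :
    ∃ c s t, c :: x = mu s ++ [c] ∧ c :: y = mu t ++ [c] := by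
  have hexp := binaryMorphism_w01101001 x y
  obtain ⟨x', c, hx'⟩ := (List.eq_nil_or_concat' x).resolve_left hx
  obtain ⟨y', d, hy'⟩ := (List.eq_nil_or_concat' y).resolve_left hy
  have hx'len : Odd x'.length := by subst hx'; simpa [Nat.even_add_one] using hxlen
  have hy'len : Odd y'.length := by subst hy'; simpa [Nat.even_add_one] using hylen
  obtain ⟨s, hs⟩ := exists_eq_mu_of_eq_append hW (A := x ++ y ++ y ++ x ++ y ++ x')
    (z := c :: x') (B := c :: y) (by rw [hexp]; simp [hx', hy']) (by grind) (by grind)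
    (by grind) (by grind)
  obtain ⟨t, ht⟩ := exists_eq_mu_of_eq_append hW (A := x ++ y') (z := d :: y')
    (B := d :: (x ++ y ++ x ++ x ++ y)) (by rw [hexp]; simp [hx', hy']) (by grind)
    (by grind) (by grind) (by grind)
  obtain ⟨t', ht'⟩ := exists_eq_mu_of_eq_append hW (A := x ++ y ++ y ++ x') (z := c :: y')
    (B := d :: (x ++ x ++ y)) (by rw [hexp]; simp [hx', hy']) (by grind)
    (by grind) (by grind) (by grind)
  obtain rfl := eq_of_cons_eq_mu ht' ht
  exact ⟨c, s, t, by rw [hx', ← hs]; rfl, by rw [hy', ← ht]; rfl⟩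

end Desubstitution

section Characterization

variable {α : ℝ} {h : List Bool → List Bool} {s t w x y : List Bool} {b c : Bool} {k : ℕ}

theorem PowerFree.tail_of_tail_mu (hw : PowerFree α (mu w).tail) : PowerFree α w.tail := by
  cases w with
  | nil => exact hw
  | cons b w =>
    rw [mu_cons] at hw
    exact (hw.of_infix (List.suffix_cons (!b) (mu w)).isInfix).of_mu

theorem PowerFree.tail_of_cons_eq_mu_append (hw : c :: w = mu s ++ [c])
    (hpf : PowerFree α w.tail) : PowerFree α s.tail := by
  rcases s with _ | ⟨b, s⟩
  · exact hpf.of_infix List.nil_infix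
  · rw [mu_cons] at hw
    obtain rfl : w = (!b) :: (mu s ++ [c]) := (List.cons.inj hw).2
    exact (hpf.of_infix (List.prefix_append (mu s) [c]).isInfix).of_mu

theorem eq_of_cons_eq_mu_iterate_append (hx : c :: x = mu (mu^[k] [b]) ++ [c]) : c = b := by
  obtain ⟨v, hv⟩ : ∃ v, mu^[k + 1] [b] = b :: v := by
    induction k + 1 with
    | zero => exact ⟨[], rfl⟩
    | succ n ih =>
      obtain ⟨v, hv⟩ := ih
      exact ⟨_, by rw [Function.iterate_succ_apply', hv, mu_cons]⟩
  rw [← Function.iterate_succ_apply' mu, hv] at hx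
  exact (List.cons.inj hx).1

/-- The condition on `x` precedes the quantifier over `y` so that most `x` are discarded early. -/
theorem exists_eq_mu_iterate_of_length_le :
    ∀ x, x.length ≤ 5 → x ≠ [] → PowerFree (7 / 3) (x ++ x) →
      ∀ y, y.length ≤ 5 → y ≠ [] → PowerFree (7 / 3) (y ++ y) →
        PowerFree (7 / 3) (binaryMorphism x y w01101001).tail →
          ∃ k ∈ List.range 3, ∃ b, x = mu^[k] [b] ∧ y = mu^[k] [!b] := by
  decide +kernel

theorem PowerFree.exists_desubstitution
    (hpf : PowerFree (7 / 3) (binaryMorphism x y w01101001).tail) (hx : x ≠ []) (hy : y ≠ [])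
    (hlen : 6 ≤ x.length ∨ 6 ≤ y.length) :
    (∃ s t, x = mu s ∧ y = mu t) ∨ ∃ c s t, c :: x = mu s ++ [c] ∧ c :: y = mu t ++ [c] := by
  obtain ⟨a, T, hT⟩ : ∃ a T, binaryMorphism x y w01101001 = a :: T :=
    List.exists_cons_of_ne_nil (by simp [binaryMorphism_w01101001, hx])
  obtain ⟨u, r, v, hfact, hu, hv⟩ := hpf.exists_factorization
  rw [hT, List.tail_cons] at hfact
  have hW : binaryMorphism x y w01101001 = (a :: u) ++ mu r ++ v := by
    rw [hT, hfact, List.cons_append, List.cons_append]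
  have hu' : (a :: u).length ≤ 3 := Nat.succ_le_succ hu
  obtain ⟨hxlen, hylen⟩ := even_length_of_eq_append_mu_append hW hu' hv hpf hx hy hlen
  rcases Nat.even_or_odd (a :: u).length with heven | hodd
  · exact .inl (exists_eq_mu_of_even_length hW hu' hv hy hxlen hylen heven)
  · exact .inr (exists_cons_eq_mu_append_of_odd_length hW hu' hv hx hy hxlen hylen hodd)

/-- The first letter is dropped because power-freeness of the tail, unlike that of the whole word,
passes to the preimage also when the blocks of `mu` straddle the boundaries of `x` and `y`. -/
theorem PowerFree.exists_eq_mu_iterate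
    (hpf : PowerFree (7 / 3) (binaryMorphism x y w01101001).tail) (hx : x ≠ []) (hy : y ≠ []) :
    ∃ k b, x = mu^[k] [b] ∧ y = mu^[k] [!b] := by
  induction hn : x.length + y.length using Nat.strong_induction_on generalizing x y with
  | _ n ih =>
  by_cases hshort : x.length ≤ 5 ∧ y.length ≤ 5
  · have hxx : PowerFree (7 / 3) (x ++ x) := hpf.of_infix
      ⟨x.tail ++ y ++ y ++ x ++ y, y, by simp [binaryMorphism_w01101001, hx]⟩
    have hyy : PowerFree (7 / 3) (y ++ y) := hpf.of_infix
      ⟨x.tail, x ++ y ++ x ++ x ++ y, by simp [binaryMorphism_w01101001, hx]⟩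
    obtain ⟨k, -, hk⟩ :=
      exists_eq_mu_iterate_of_length_le x hshort.1 hx hxx y hshort.2 hy hyy hpf
    exact ⟨k, hk⟩
  have hlen : 6 ≤ x.length ∨ 6 ≤ y.length := by omega
  rcases hpf.exists_desubstitution hx hy hlen with ⟨s, t, rfl, rfl⟩ | ⟨c, s, t, hs, ht⟩
  · have hs : s ≠ [] := by rintro rfl; exact hx mu_nil
    have ht : t ≠ [] := by rintro rfl; exact hy mu_nil
    have hspos := List.length_pos_of_ne_nil hs
    rw [length_mu, length_mu] at hn
    rw [← mu_binaryMorphism] at hpf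
    obtain ⟨k, b, rfl, rfl⟩ := ih _ (by omega) hpf.tail_of_tail_mu hs ht rfl
    exact ⟨k + 1, b, by rw [Function.iterate_succ_apply'], by rw [Function.iterate_succ_apply']⟩
  · have hs₀ : s ≠ [] := by rintro rfl; simp [mu_nil, hx] at hs
    have ht₀ : t ≠ [] := by rintro rfl; simp [mu_nil, hy] at ht
    have hpf' := hpf.tail_of_cons_eq_mu_append (cons_binaryMorphism_of_cons_eq hs ht _)
    have hspos := List.length_pos_of_ne_nil hs₀
    have hslen := congrArg List.length hs
    have htlen := congrArg List.length ht
    simp only [List.length_cons, List.length_append, length_mu, List.length_nil] at hslen htlen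
    obtain ⟨k, b, rfl, rfl⟩ := ih _ (by omega) hpf' hs₀ ht₀ rfl
    have hbb : b = !b := (eq_of_cons_eq_mu_iterate_append hs).symm.trans
      (eq_of_cons_eq_mu_iterate_append ht)
    exact absurd hbb (Bool.self_ne_not b)

theorem eMorph_mu (w : List Bool) : eMorph (mu w) = mu (eMorph w) := by
  induction w with
  | nil => rfl
  | cons b w ih => simpa [eMorph, mu_cons] using ih

theorem isMorphism_eMorph : IsMorphism eMorph := fun _ _ => List.map_append

theorem isMorphism_mu_iterate (k : ℕ) : IsMorphism mu^[k] := by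
  induction k with
  | zero => exact fun _ _ => rfl
  | succ k ih => exact fun x y => by simp only [Function.iterate_succ_apply', ih x y, mu_append]

theorem IsMorphism.eq_mu_iterate_or_eq (hmor : IsMorphism h) (hfalse : h [false] = mu^[k] [b])
    (htrue : h [true] = mu^[k] [!b]) : h = mu^[k] ∨ h = eMorph ∘ mu^[k] := by
  cases b with
  | false =>
    rw [hmor.eq_binaryMorphism, (isMorphism_mu_iterate k).eq_binaryMorphism, hfalse, htrue]
    exact .inl rfl
  | true =>
    have hcomm (w : List Bool) : eMorph (mu^[k] w) = mu^[k] (eMorph w) :=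
      Function.Commute.iterate_right eMorph_mu k w
    have hcomp : IsMorphism (eMorph ∘ mu^[k]) := fun x y => by
      simp only [Function.comp_apply, isMorphism_mu_iterate k x y, isMorphism_eMorph _ _]
    rw [hmor.eq_binaryMorphism, hcomp.eq_binaryMorphism, hfalse, htrue, Function.comp_apply,
      Function.comp_apply, hcomm, hcomm]
    exact .inr rfl

theorem NonErasing.exists_eq_mu_iterate (hmor : IsMorphism h) (hne : NonErasing h)
    (hpf : PowerFree (7 / 3) (h w01101001)) : ∃ k, h = mu^[k] ∨ h = eMorph ∘ mu^[k] := by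
  rw [hmor.eq_binaryMorphism] at hpf
  obtain ⟨k, b, hfalse, htrue⟩ := PowerFree.exists_eq_mu_iterate
    (hpf.of_infix (List.tail_suffix _).isInfix) hne.1 hne.2
  exact ⟨k, hmor.eq_mu_iterate_or_eq hfalse htrue⟩

theorem powerFree_map_of_eq_mu_iterate (hα : 2 < α) (hh : h = mu^[k] ∨ h = eMorph ∘ mu^[k])
    (hw : PowerFree α w) : PowerFree α (h w) := by
  rcases hh with rfl | rfl
  · exact powerFree_mu_iterate hα hw k
  · exact powerFree_eMorph (powerFree_mu_iterate hα hw k)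

end Characterization

theorem power_free_morphism_tfae_general {α : ℝ} (hα : 2 < α) (hα' : α ≤ 7 / 3)
    {h : List Bool → List Bool} (hmor : IsMorphism h) (h01 : h [false, true] ≠ []) :
    List.TFAE
      [ NonErasing h ∧ PowerFree α (h w01101001),
        ∃ k : ℕ, h = mu^[k] ∨ h = eMorph ∘ mu^[k],
        ∀ w u : ℕ → Bool, PowerFreeInf α w → IsMorphImage h w u → PowerFreeInf α u,
        ∃ w u : ℕ → Bool, PowerFreeInf α w ∧ IsMorphImage h w u ∧ PowerFreeInf α u ] := by
  tfae_have 1 → 2 := fun ⟨hne, hpf⟩ => hne.exists_eq_mu_iterate hmor (hpf.mono hα')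
  tfae_have 2 → 3 := fun ⟨_, hk⟩ _ _ hw hu =>
    hu.powerFreeInf (fun _ => powerFree_map_of_eq_mu_iterate hα hk) hw
  tfae_have 3 → 4 := by
    intro hpreserves
    obtain ⟨u, hu⟩ := hmor.exists_isMorphImage_tm h01
    exact ⟨tm, u, powerFreeInf_tm hα, hu, hpreserves tm u (powerFreeInf_tm hα) hu⟩
  tfae_have 4 → 1 := by
    rintro ⟨w, u, hw, hwu, hu⟩
    have hpf := powerFree_map_w01101001_of_isMorphImage hmor (hw.mono hα') hwu hu
    exact ⟨hpf.nonErasing hmor h01 (by linarith), hpf⟩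
  tfae_finish

/-- For a morphism `h` with `h(01) ≠ ε`, the following are equivalent:
(a) `h` is non-erasing and `h(01101001)` is `7/3`-power-free;
(b) `h = μ^k` or `h = E ∘ μ^k` for some `k ≥ 0`;
(c) `h` maps every infinite `7/3`-power-free word to an infinite `7/3`-power-free word;
(d) some infinite `7/3`-power-free word has `7/3`-power-free image under `h`. -/
theorem power_free_morphism_tfae (h : List Bool → List Bool)
    (hmor : IsMorphism h) (h01 : h [false, true] ≠ []) :
    List.TFAE
      [ NonErasing h ∧ PowerFree (7/3 : ℝ) (h w01101001),
        ∃ k : ℕ, h = mu^[k] ∨ h = eMorph ∘ mu^[k],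
        ∀ w u : ℕ → Bool, PowerFreeInf (7/3 : ℝ) w → IsMorphImage h w u →
          PowerFreeInf (7/3 : ℝ) u,
        ∃ w u : ℕ → Bool, PowerFreeInf (7/3 : ℝ) w ∧ IsMorphImage h w u ∧
          PowerFreeInf (7/3 : ℝ) u ] :=
  power_free_morphism_tfae_general (by norm_num) le_rfl hmor h01
end

section
/- For every integer k ≥ 0, each of the morphisms μ^k and E ∘ μ^k maps every infinite 7/3-power-free binary word to an infinite 7/3-power-free binary word. -/
/-!
A word contains an `α`-power exactly when some factor of length `m` has a period `p > 0` with
`α * p ≤ m`. Let a factor of length `m` of `μ(v)` have period `p`. If `p = 2q`, comparing letters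
at positions of equal parity gives a factor of `v` of length `⌈m/2⌉` with period `q`, so the
exponent does not drop. If `p` is odd, two adjacent letters that both recur at distance `p` are
distinct, because either they or their recurrences form a block `01` or `10` of `μ(v)`. For
`m > 2p` this makes the first `p + 1` letters of the factor alternate, so those at offsets `0` and
`p` differ, against the period. Hence powers of exponent greater than `2` only have even periods,
and `μ` preserves `α`-power-freeness for every `α > 2`.
-/

section Period

variable {A : Type*}

theorem prefix_append_self_iff_exists_replicate {x : List A} (hx : x ≠ []) (z : List A) :
    z <+: x ++ z ↔ ∃ n x', x' <+: x ∧ z = (List.replicate n x).flatten ++ x' := by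
  constructor
  · intro hz
    induction hn : z.length using Nat.strong_induction_on generalizing z with
    | _ N ih =>
      rcases List.prefix_or_prefix_of_prefix hz (List.prefix_append x z) with hzx | ⟨t, rfl⟩
      · exact ⟨0, z, hzx, by simp⟩
      · have hpos := List.length_pos_of_ne_nil hx
        obtain ⟨n, x', hx', ht⟩ :=
          ih t.length (by grind) t ((List.prefix_append_right_inj x).mp hz) rfl
        refine ⟨n + 1, x', hx', ?_⟩
        rw [List.replicate_succ, List.flatten_cons, List.append_assoc, ← ht]
  · rintro ⟨n, x', hx', rfl⟩
    rw [← List.append_assoc, ← List.flatten_cons, ← List.replicate_succ, List.replicate_succ',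
      List.flatten_append, List.flatten_singleton, List.append_assoc,
      List.prefix_append_right_inj]
    exact hx'.trans (List.prefix_append x x')

theorem hasPeriod_iff_exists_prefix_append [Nonempty A] {z : List A} {p : ℕ} :
    z.HasPeriod p ↔ ∃ x : List A, x.length = p ∧ z <+: x ++ z := by
  constructor
  · intro hz
    rcases le_total p z.length with hp | hp
    · exact ⟨z.take p, List.length_take_of_le hp, hz⟩
    · refine ⟨z ++ List.replicate (p - z.length) (Classical.arbitrary A), by simp [hp], ?_⟩
      rw [List.append_assoc]
      exact List.prefix_append _ _
  · rintro ⟨x, rfl, hz⟩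
    rcases le_total x.length z.length with hp | hp
    · obtain ⟨t, rfl⟩ := List.prefix_of_prefix_length_le (List.prefix_append x z) hz hp
      rwa [List.HasPeriod, List.take_left]
    · exact List.hasPeriod_of_length_le z _ hp

/-- The factor `u i, …, u (i + m - 1)` of length `m` of the infinite word `u`. -/
def factor (u : ℕ → A) (i m : ℕ) : List A := (List.range m).map fun k => u (i + k)

@[simp]
theorem length_factor (u : ℕ → A) (i m : ℕ) : (factor u i m).length = m := by
  simp [factor]

theorem hasPeriod_factor_iff {u : ℕ → A} {i m p : ℕ} :
    (factor u i m).HasPeriod p ↔ ∀ j, j + p < m → u (i + j + p) = u (i + j) := by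
  rw [List.hasPeriod_iff_getElem?, length_factor]
  refine forall_congr' fun j => ?_
  rw [Nat.lt_sub_iff_add_lt]
  refine forall_congr' fun hj => ?_
  have hjm : j < m := by omega
  simp [factor, hj, hjm, Nat.add_assoc, eq_comm]

theorem hasPeriod_factor_comp_iff {B : Type*} {f : A → B} (hf : Function.Injective f)
    {u : ℕ → A} {i m p : ℕ} :
    (factor (f ∘ u) i m).HasPeriod p ↔ (factor u i m).HasPeriod p := by
  simp only [hasPeriod_factor_iff, Function.comp_apply, hf.eq_iff]

end Period

theorem isPower_iff_exists_hasPeriod {β : ℚ} {z : List Bool} :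
    IsPower β z ↔ ∃ p : ℕ, 0 < p ∧ z.HasPeriod p ∧ (z.length : ℚ) = β * p := by
  have exponent_eq_iff {n : ℕ} {x x' : List Bool} (hx : x ≠ []) :
      (n : ℚ) + (x'.length : ℚ) / (x.length : ℚ) = β ↔
        ((((List.replicate n x).flatten ++ x').length : ℕ) : ℚ) = β * x.length := by
    have hx0 : (x.length : ℚ) ≠ 0 := by simpa using hx
    rw [← mul_left_inj' hx0, add_mul, div_mul_cancel₀ _ hx0]
    simp
  constructor
  · rintro ⟨n, x, x', hx, hx', rfl, hβ⟩
    exact ⟨x.length, List.length_pos_of_ne_nil hx, hasPeriod_iff_exists_prefix_append.mpr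
      ⟨x, rfl, (prefix_append_self_iff_exists_replicate hx _).mpr ⟨n, x', hx', rfl⟩⟩,
      (exponent_eq_iff hx).mp hβ⟩
  · rintro ⟨p, hp, hz, hβ⟩
    obtain ⟨x, rfl, hxz⟩ := hasPeriod_iff_exists_prefix_append.mp hz
    have hx : x ≠ [] := List.ne_nil_of_length_pos hp
    obtain ⟨n, x', hx', rfl⟩ := (prefix_append_self_iff_exists_replicate hx z).mp hxz
    exact ⟨n, x, x', hx, hx', rfl, (exponent_eq_iff hx).mpr hβ⟩

theorem infSubword_iff_exists_factor {z : List Bool} {u : ℕ → Bool} :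
    InfSubword z u ↔ ∃ i m, z = factor u i m := by
  constructor
  · rintro ⟨i, hz⟩
    exact ⟨i, z.length, hz⟩
  · rintro ⟨i, m, rfl⟩
    exact ⟨i, by rw [length_factor, factor]⟩

theorem powerFreeInf_iff_forall_hasPeriod {α : ℝ} {u : ℕ → Bool} :
    PowerFreeInf α u ↔
      ∀ i m p : ℕ, 0 < p → (factor u i m).HasPeriod p → (m : ℝ) < α * p := by
  constructor
  · intro hu i m p hp hper
    have hp' : (0 : ℝ) < p := Nat.cast_pos.mpr hp
    by_contra! hm
    refine hu _ (infSubword_iff_exists_factor.mpr ⟨i, m, rfl⟩) (m / p) ?_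
      (isPower_iff_exists_hasPeriod.mpr ⟨p, hp, hper, ?_⟩)
    · push_cast
      rwa [le_div_iff₀ hp']
    · rw [length_factor, div_mul_cancel₀ _ (by exact_mod_cast hp.ne')]
  · intro hu z hz β hβ hpow
    obtain ⟨i, m, rfl⟩ := infSubword_iff_exists_factor.mp hz
    obtain ⟨p, hp, hper, hm⟩ := isPower_iff_exists_hasPeriod.mp hpow
    rw [length_factor] at hm
    refine (hu i m p hp hper).not_ge ?_
    calc α * p ≤ (β : ℝ) * p := by gcongr
      _ = m := by exact_mod_cast hm.symm

theorem PowerFreeInf.comp_injective {α : ℝ} {u : ℕ → Bool} (hu : PowerFreeInf α u)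
    {f : Bool → Bool} (hf : Function.Injective f) : PowerFreeInf α (f ∘ u) := by
  simpa only [powerFreeInf_iff_forall_hasPeriod, hasPeriod_factor_comp_iff hf] using hu

/-- The image of an infinite word under the Thue–Morse morphism `μ`, letter by letter: the letter
`v n` contributes the block `v n, !v n` at positions `2 * n` and `2 * n + 1`. -/
def muInf (v : ℕ → Bool) (n : ℕ) : Bool := if Even n then v (n / 2) else !v (n / 2)

theorem muInf_two_mul (v : ℕ → Bool) (n : ℕ) : muInf v (2 * n) = v n := by
  simp [muInf]

theorem muInf_two_mul_add_one (v : ℕ → Bool) (n : ℕ) : muInf v (2 * n + 1) = !v n := by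
  simp [muInf, Nat.mul_add_div]

theorem muInf_add_one_of_even (v : ℕ → Bool) {n : ℕ} (hn : Even n) :
    muInf v (n + 1) = !muInf v n := by
  obtain ⟨c, rfl⟩ := hn.two_dvd
  rw [muInf_two_mul_add_one, muInf_two_mul]

theorem muInf_add_two_mul_eq_iff (v : ℕ → Bool) (n q : ℕ) :
    muInf v (n + 2 * q) = muInf v n ↔ v (n / 2 + q) = v (n / 2) := by
  unfold muInf
  rw [Nat.add_mul_div_left n q two_pos]
  by_cases hn : Even n <;> simp [hn, Nat.even_add]

theorem hasPeriod_factor_of_hasPeriod_factor_muInf {v : ℕ → Bool} {i m q : ℕ}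
    (h : (factor (muInf v) i m).HasPeriod (2 * q)) :
    (factor v (i / 2) ((m + 1) / 2)).HasPeriod q := by
  rw [hasPeriod_factor_iff] at h ⊢
  intro j hj
  have hj' := (muInf_add_two_mul_eq_iff v _ q).mp (h (2 * j) (by omega))
  rwa [Nat.add_mul_div_left i j two_pos] at hj'

theorem muInf_add_one_of_odd_period {v : ℕ → Bool} {n p : ℕ} (hp : Odd p)
    (h₀ : muInf v (n + p) = muInf v n) (h₁ : muInf v (n + 1 + p) = muInf v (n + 1)) :
    muInf v (n + 1) = !muInf v n := by
  rcases Nat.even_or_odd n with hn | hn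
  · exact muInf_add_one_of_even v hn
  · rw [← h₀, ← h₁, Nat.add_right_comm, muInf_add_one_of_even v (hn.add_odd hp)]

theorem apply_add_eq_iterate {A : Type*} {f : A → A} {u : ℕ → A} {i n : ℕ}
    (h : ∀ j < n, u (i + j + 1) = f (u (i + j))) : u (i + n) = f^[n] (u i) := by
  induction n with
  | zero => rfl
  | succ n ih =>
    rw [Function.iterate_succ_apply', ← ih fun j hj => h j (by omega), ← h n (by omega), add_assoc]

theorem le_two_mul_of_odd_of_hasPeriod_factor_muInf {v : ℕ → Bool} {i m p : ℕ} (hp : Odd p)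
    (h : (factor (muInf v) i m).HasPeriod p) : m ≤ 2 * p := by
  by_contra! hm
  rw [hasPeriod_factor_iff] at h
  have alternates : ∀ j < p, muInf v (i + j + 1) = !muInf v (i + j) := fun j hj =>
    muInf_add_one_of_odd_period hp (h j (by omega)) (h (j + 1) (by omega))
  have flipped : muInf v (i + p) = !muInf v i := by
    rw [apply_add_eq_iterate alternates, Bool.involutive_not.iterate_odd hp]
  have repeated : muInf v (i + p) = muInf v i := h 0 (by omega)
  exact Bool.not_ne_self _ (flipped.symm.trans repeated)

theorem powerFreeInf_muInf {α : ℝ} (hα : 2 < α) {v : ℕ → Bool} (hv : PowerFreeInf α v) :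
    PowerFreeInf α (muInf v) := by
  rw [powerFreeInf_iff_forall_hasPeriod] at hv ⊢
  intro i m p hp hper
  have hp' : (0 : ℝ) < p := Nat.cast_pos.mpr hp
  rcases Nat.even_or_odd' p with ⟨q, rfl | rfl⟩
  · have hq := hv _ _ q (by omega) (hasPeriod_factor_of_hasPeriod_factor_muInf hper)
    have hm : (m : ℝ) ≤ 2 * ((m + 1) / 2 : ℕ) := by
      exact_mod_cast (by omega : m ≤ 2 * ((m + 1) / 2))
    push_cast
    linarith
  · calc (m : ℝ) ≤ 2 * (2 * q + 1 : ℕ) := by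
          exact_mod_cast le_two_mul_of_odd_of_hasPeriod_factor_muInf (odd_two_mul_add_one q) hper
      _ < α * (2 * q + 1 : ℕ) := by gcongr

theorem powerFreeInf_iterate_muInf {α : ℝ} (hα : 2 < α) {v : ℕ → Bool} (hv : PowerFreeInf α v)
    (k : ℕ) : PowerFreeInf α (muInf^[k] v) :=
  Function.Iterate.rec (PowerFreeInf α) hv (fun _ => powerFreeInf_muInf hα) k

@[simp]
theorem length_wordPrefix (w : ℕ → Bool) (n : ℕ) : (wordPrefix w n).length = n := by
  simp [wordPrefix]

theorem wordPrefix_succ (w : ℕ → Bool) (n : ℕ) :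
    wordPrefix w (n + 1) = wordPrefix w n ++ [w n] := by
  simp [wordPrefix, List.range_succ]

theorem wordPrefix_muInf (v : ℕ → Bool) (n : ℕ) :
    wordPrefix (muInf v) (2 * n) = mu (wordPrefix v n) := by
  induction n with
  | zero => rfl
  | succ n ih =>
    rw [Nat.mul_succ, wordPrefix_succ, wordPrefix_succ, wordPrefix_succ, ih, muInf_two_mul,
      muInf_two_mul_add_one]
    cases v n <;> simp [mu, muLetter]

theorem wordPrefix_iterate_muInf (k : ℕ) (v : ℕ → Bool) (n : ℕ) :
    wordPrefix (muInf^[k] v) (2 ^ k * n) = mu^[k] (wordPrefix v n) := by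
  induction k with
  | zero => simp
  | succ k ih =>
    rw [Function.iterate_succ_apply', Function.iterate_succ_apply', ← ih, ← wordPrefix_muInf,
      pow_succ', mul_assoc]

theorem wordPrefix_not (v : ℕ → Bool) (n : ℕ) :
    wordPrefix (not ∘ v) n = eMorph (wordPrefix v n) := by
  simp [wordPrefix, eMorph]

theorem IsMorphImage.eq_of_wordPrefix_eq {h : List Bool → List Bool} {w u v : ℕ → Bool}
    {l : ℕ → ℕ} (hu : IsMorphImage h w u)
    (hv : ∀ n, wordPrefix v (l n) = h (wordPrefix w n)) : u = v := by
  funext m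
  obtain ⟨n, hn⟩ := hu.2 (m + 1)
  have hprefix := hu.1 n
  rw [← hv n, length_wordPrefix] at hprefix hn
  exact List.map_inj_left.mp hprefix m (List.mem_range.mpr hn)

theorem mu_iterates_preserve_power_freeness_general {α : ℝ} (hα : 2 < α) (k : ℕ)
    (w u : ℕ → Bool) (hw : PowerFreeInf α w) :
    (IsMorphImage (mu^[k]) w u → PowerFreeInf α u) ∧
    (IsMorphImage (eMorph ∘ mu^[k]) w u → PowerFreeInf α u) := by
  have hmu : PowerFreeInf α (muInf^[k] w) := powerFreeInf_iterate_muInf hα hw k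
  constructor
  · intro hu
    rwa [hu.eq_of_wordPrefix_eq (wordPrefix_iterate_muInf k w)]
  · intro hu
    have hnot (n : ℕ) : wordPrefix (not ∘ muInf^[k] w) (2 ^ k * n) =
        (eMorph ∘ mu^[k]) (wordPrefix w n) := by
      rw [wordPrefix_not, wordPrefix_iterate_muInf, Function.comp_apply]
    rw [hu.eq_of_wordPrefix_eq hnot]
    exact hmu.comp_injective Bool.involutive_not.injective

/-- For every `k ≥ 0`, each of `μ^k` and `E ∘ μ^k` maps every infinite
`7/3`-power-free word to an infinite `7/3`-power-free word. -/
theorem mu_iterates_preserve_power_freeness (k : ℕ) (w u : ℕ → Bool)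
    (hw : PowerFreeInf (7/3 : ℝ) w) :
    (IsMorphImage (mu^[k]) w u → PowerFreeInf (7/3 : ℝ) u) ∧
    (IsMorphImage (eMorph ∘ mu^[k]) w u → PowerFreeInf (7/3 : ℝ) u) :=
  mu_iterates_preserve_power_freeness_general (by norm_num) k w u hw
end

section
/- Let h : Σ₂* → Σ₂* be the morphism defined by h(0) = 0110100110110010110 and h(1) = 1001011001001101001. Suppose h(ab) = t h(c) u for some letters a, b, c ∈ Σ₂ and words t, u ∈ Σ₂*. Then t = ε or u = ε. -/
/-- The images of the letters under the morphism `h` of Section 4: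
`h(0) = 0110100110110010110`, `h(1) = 1001011001001101001`. -/
def h19Letter : Bool → List Bool
  | false => [false, true, true, false, true, false, false, true, true, false, true,
      true, false, false, true, false, true, true, false]
  | true  => [true, false, false, true, false, true, true, false, false, true, false,
      false, true, true, false, true, false, false, true]

/-- The morphism `h` with `h(0) = 0110100110110010110` and `h(1) = 1001011001001101001`. -/
def h19 (w : List Bool) : List Bool := (w.map h19Letter).flatten

/-! A nontrivial occurrence of `h(c)` inside `h(a) h(b)` cuts `h(c)` into two proper overlaps,
one with `h(a)` and one with `h(b)`, whose lengths add up to `19`. But proper overlaps between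
images of letters have length at most `8`. -/

section Overlap

variable {α : Type*} {p t u x y z : List α}

/-- The word `p` is an overlap of `x` with `y`: it is what `x` shares with an occurrence of `y` that
starts inside `x` and runs on to its end or beyond. `p` may be empty, or all of `x` or of `y`. -/
def IsOverlap (p x y : List α) : Prop := p <:+ x ∧ p <+: y

lemma exists_eq_append_of_append_eq_append_append (h : x ++ y = t ++ z ++ u)
    (htx : t.length ≤ x.length) (huy : u.length ≤ y.length) :
    ∃ p q, x = t ++ p ∧ z = p ++ q ∧ y = q ++ u := by
  obtain ⟨p, rfl⟩ : t <+: x :=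
    List.prefix_of_prefix_length_le ⟨z ++ u, by rw [h, List.append_assoc]⟩ ⟨y, rfl⟩ htx
  obtain ⟨q, rfl⟩ : u <:+ y :=
    List.suffix_of_suffix_length_le ⟨t ++ z, h.symm⟩ ⟨t ++ p, rfl⟩ huy
  have htz : t ++ p ++ q = t ++ z := by
    simpa only [← List.append_assoc, List.append_cancel_right_eq] using h
  exact ⟨p, q, rfl, by simpa using htz.symm, rfl⟩

theorem eq_nil_or_eq_nil_of_two_mul_length_overlap_lt (h : x ++ y = t ++ z ++ u)
    (hx : x.length ≤ z.length) (hy : y.length ≤ z.length)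
    (hxz : ∀ p, IsOverlap p x z → p.length < z.length → 2 * p.length < z.length)
    (hzy : ∀ q, IsOverlap q z y → q.length < z.length → 2 * q.length < z.length) :
    t = [] ∨ u = [] := by
  have hlen : x.length + y.length = t.length + z.length + u.length := by
    simpa only [List.length_append] using congrArg List.length h
  obtain ⟨p, q, rfl, rfl, rfl⟩ :=
    exists_eq_append_of_append_eq_append_append h (by lia) (by lia)
  simp only [List.length_append] at hx hy hxz hzy
  by_contra! hne
  have ht : 0 < t.length := List.length_pos_iff.mpr hne.1
  have hu : 0 < u.length := List.length_pos_iff.mpr hne.2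
  have hp : 2 * p.length < p.length + q.length :=
    hxz p ⟨List.suffix_append t p, List.prefix_append p q⟩ (by lia)
  have hq : 2 * q.length < p.length + q.length :=
    hzy q ⟨List.suffix_append p q, List.prefix_append q u⟩ (by lia)
  lia

end Overlap

lemma length_h19Letter (a : Bool) : (h19Letter a).length = 19 := by
  cases a <;> rfl

lemma IsOverlap.length_le_eight_of_h19Letter {a b : Bool} {p : List Bool}
    (hp : IsOverlap p (h19Letter a) (h19Letter b)) (hlt : p.length < 19) : p.length ≤ 8 := by
  have length_le_of_mem_tails : ∀ a b, ∀ p ∈ (h19Letter a).tails,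
      p <+: h19Letter b → p.length < 19 → p.length ≤ 8 := by decide
  exact length_le_of_mem_tails a b p ((List.mem_tails p _).mpr hp.1) hp.2 hlt

/-- For the morphism `h` of Section 4, any inclusion `h(ab) = t h(c) u` is trivial:
`t = ε` or `u = ε`. -/
theorem h19_inclusion_trivial (a b c : Bool) (t u : List Bool)
    (heq : h19 [a, b] = t ++ h19 [c] ++ u) :
    t = [] ∨ u = [] := by
  have hab : h19Letter a ++ h19Letter b = t ++ h19Letter c ++ u := by
    simpa only [h19, List.map_cons, List.map_nil, List.flatten_cons, List.flatten_nil,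
      List.append_nil] using heq
  have short (d e : Bool) (p : List Bool) (hp : IsOverlap p (h19Letter d) (h19Letter e))
      (hlt : p.length < (h19Letter c).length) : 2 * p.length < (h19Letter c).length := by
    rw [length_h19Letter] at hlt ⊢
    have : p.length ≤ 8 := hp.length_le_eight_of_h19Letter hlt
    lia
  have length_eq (d : Bool) : (h19Letter d).length = (h19Letter c).length := by
    rw [length_h19Letter, length_h19Letter]
  exact eq_nil_or_eq_nil_of_two_mul_length_overlap_lt hab (length_eq a).le (length_eq b).le
    (short a c) (short c b)
end

section
/- Let h : Σ₂* → Σ₂* be the morphism defined by h(0) = 0110100110110010110 and h(1) = 1001011001001101001. Suppose there exist letters a, b, c ∈ Σ₂ and words s, t, u, v ∈ Σ₂* such that h(a) = st, h(b) = uv, and h(c) = sv. Then a = c or b = c. -/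
section FirstAndLastLetters

variable {α β : Type*} {f : α → List β} {a b c : α} {s t u v : List β}

theorem eq_of_prefix_of_injective_head? (hf : Function.Injective fun x => (f x).head?)
    (hs : s ≠ []) (ha : s <+: f a) (hc : s <+: f c) : a = c := by
  obtain ⟨t, ha⟩ := ha
  obtain ⟨v, hc⟩ := hc
  apply hf
  change (f a).head? = (f c).head?
  rw [← ha, ← hc, List.head?_append_of_ne_nil s hs, List.head?_append_of_ne_nil s hs]

theorem eq_of_suffix_of_injective_getLast? (hf : Function.Injective fun x => (f x).getLast?)
    (hv : v ≠ []) (hb : v <:+ f b) (hc : v <:+ f c) : b = c := by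
  obtain ⟨u, hb⟩ := hb
  obtain ⟨s, hc⟩ := hc
  apply hf
  change (f b).getLast? = (f c).getLast?
  rw [← hb, ← hc, List.getLast?_append_of_ne_nil u hv, List.getLast?_append_of_ne_nil s hv]

theorem eq_or_eq_of_interchange (hhead : Function.Injective fun x => (f x).head?)
    (hlast : Function.Injective fun x => (f x).getLast?) (hne : f c ≠ [])
    (ha : f a = s ++ t) (hb : f b = u ++ v) (hc : f c = s ++ v) : a = c ∨ b = c := by
  have hsv : s ≠ [] ∨ v ≠ [] := by
    rwa [hc, ne_eq, List.append_eq_nil_iff, not_and_or] at hne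
  rcases hsv with hs | hv
  · exact Or.inl (eq_of_prefix_of_injective_head? hhead hs ⟨t, ha.symm⟩ ⟨v, hc.symm⟩)
  · exact Or.inr (eq_of_suffix_of_injective_getLast? hlast hv ⟨u, hb.symm⟩ ⟨s, hc.symm⟩)

end FirstAndLastLetters

theorem head?_h19_singleton (x : Bool) : (h19 [x]).head? = some x := by
  cases x <;> rfl

theorem getLast?_h19_singleton (x : Bool) : (h19 [x]).getLast? = some x := by
  cases x <;> rfl

/-- For the morphism `h` of Section 4: if `h(a) = st`, `h(b) = uv`, and `h(c) = sv`,
then `a = c` or `b = c`. -/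
theorem h19_interchange (a b c : Bool) (s t u v : List Bool)
    (ha : h19 [a] = s ++ t) (hb : h19 [b] = u ++ v) (hc : h19 [c] = s ++ v) :
    a = c ∨ b = c := by
  have hhead : Function.Injective fun x => (h19 [x]).head? := by
    simpa only [head?_h19_singleton] using Option.some_injective Bool
  have hlast : Function.Injective fun x => (h19 [x]).getLast? := by
    simpa only [getLast?_h19_singleton] using Option.some_injective Bool
  have hne : h19 [c] ≠ [] := List.ne_nil_of_mem (List.mem_of_head? (head?_h19_singleton c))
  exact eq_or_eq_of_interchange hhead hlast hne ha hb hc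
end
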